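/- For every prime p, every integer N ≥ 2, and every β ∈ ℂ with Re(β) > −2/N, the integral Z_N(ℤ_p, β) converges absolutely and Z_N(ℤ_p, β) = N! · p^{(1/2)·(N(N−1)/2)·β} · F_N(log p, β). -/

import Mathlib

open MeasureTheory
open scoped LinearAlgebra.Projectivization

namespace LogCoulomb

noncomputable section

/-! ### The projective line over `ℚ_p`, its spherical metric and `PGL₂`-invariant measure -/

variable (p : ℕ) [Fact p.Prime]

instance : MeasurableSpace ℚ_[p] := borel _
instance : BorelSpace ℚ_[p] := ⟨rfl⟩

/-- The projective line over `ℚ_p`. -/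
abbrev P1 := ℙ ℚ_[p] (Fin 2 → ℚ_[p])

instance : TopologicalSpace (P1 p) :=
  inferInstanceAs (TopologicalSpace (Quotient _))

instance : MeasurableSpace (P1 p) := borel _
instance : BorelSpace (P1 p) := ⟨rfl⟩

/-- Spherical distance on homogeneous coordinates:
`δ((x₀,x₁),(y₀,y₁)) = |x₀y₁ - x₁y₀| / (max(|x₀|,|x₁|) ⬝ max(|y₀|,|y₁|))`. -/
def sdelta (x y : Fin 2 → ℚ_[p]) : ℝ :=
  ‖x 0 * y 1 - x 1 * y 0‖ / (max ‖x 0‖ ‖x 1‖ * max ‖y 0‖ ‖y 1‖)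

/-- The spherical metric on `ℙ¹(ℚ_p)`, defined via the canonical representatives. -/
def pdelta (ξ η : P1 p) : ℝ := sdelta p ξ.rep η.rep

open Classical in
/-- The action of a matrix on `ℙ¹(ℚ_p)`: `[x₀:x₁] ↦ [a x₀ + b x₁ : c x₀ + d x₁]`
(well-defined, and given by the first branch of the `if`, whenever `A` is invertible). -/
def mobius (A : Matrix (Fin 2) (Fin 2) ℚ_[p]) (ξ : P1 p) : P1 p :=
  if h : A.mulVec ξ.rep ≠ 0 then Projectivization.mk ℚ_[p] (A.mulVec ξ.rep) h else ξ

/-- `ν` is invariant under the action of `GL₂(ℤ_p)` on `ℙ¹(ℚ_p)`; membership of the matrix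
entries in `ℤ_p`, and invertibility of the matrix over `ℤ_p`, are phrased via the `p`-adic
norm on `ℚ_p`. -/
def IsGLInvariant (ν : Measure (P1 p)) : Prop :=
  ∀ A : Matrix (Fin 2) (Fin 2) ℚ_[p],
    (∀ i j, ‖A i j‖ ≤ 1) → ‖A.det‖ = 1 →
      ∀ M : Set (P1 p), MeasurableSet M → ν (mobius p A '' M) = ν M

/-- The embedding `ι : ℚ_p → ℙ¹(ℚ_p)`, `x ↦ [x : 1]`. -/
def iota (x : ℚ_[p]) : P1 p :=
  Projectivization.mk ℚ_[p] ![x, 1] (by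
    intro h
    have h1 := congrFun h 1
    simp at h1)

/-! ### Canonical partition functions -/

/-- The pairs `(i,j)` with `i < j`. -/
def pairs (N : ℕ) : Finset (Fin N × Fin N) := Finset.univ.filter fun q => q.1 < q.2

/-- The closed unit ball `ℤ_p = R` inside `ℚ_p`. -/
def Zball : Set ℚ_[p] := {x | ‖x‖ ≤ 1}

/-- The open unit ball `pℤ_p = P` inside `ℚ_p`. -/
def Pball : Set ℚ_[p] := {x | ‖x‖ < 1}

/-- The one-component canonical partition function
`Z_N(X, β) = ∫_{X^N} ∏_{i<j} |x_i - x_j|^β dμ^N` (as a Bochner integral, whether or not it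
converges absolutely). -/
def ZN (μ : Measure ℚ_[p]) [SigmaFinite μ] (X : Set ℚ_[p]) (N : ℕ) (β : ℂ) : ℂ :=
  ∫ x : Fin N → ℚ_[p], ∏ q ∈ pairs N, (‖x q.1 - x q.2‖ : ℂ) ^ β
    ∂(Measure.pi fun _ => μ.restrict X)

/-- The multivariate canonical partition function
`𝒵_I(X, s) = ∫_{X^I} ∏_{i<j, i,j ∈ I} |x_i - x_j|^{s_{ij}} dμ^I` for a subset `I ⊆ [N]`. -/
def ZI (μ : Measure ℚ_[p]) [SigmaFinite μ] (X : Set ℚ_[p]) {N : ℕ} (I : Finset (Fin N))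
    (s : Fin N → Fin N → ℂ) : ℂ :=
  ∫ x : I → ℚ_[p],
    ∏ q ∈ Finset.univ.filter (fun q : (↥I) × (↥I) => (q.1 : Fin N) < (q.2 : Fin N)),
      (‖x q.1 - x q.2‖ : ℂ) ^ s q.1.1 q.2.1
    ∂(Measure.pi fun _ => μ.restrict X)

/-- The multivariate canonical partition function
`𝒵_N(ℙ¹(ℚ_p), s) = ∫_{(ℙ¹(ℚ_p))^N} ∏_{i<j} δ(ξ_i,ξ_j)^{s_{ij}} dν^N`. -/
def ZP1s (ν : Measure (P1 p)) [SigmaFinite ν] (N : ℕ) (s : Fin N → Fin N → ℂ) : ℂ :=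
  ∫ x : Fin N → P1 p, ∏ q ∈ pairs N, ((pdelta p (x q.1) (x q.2) : ℝ) : ℂ) ^ s q.1 q.2
    ∂(Measure.pi fun _ => ν)

/-- The one-component canonical partition function `Z_N(ℙ¹(ℚ_p), β)`. -/
def ZP1 (ν : Measure (P1 p)) [SigmaFinite ν] (N : ℕ) (β : ℂ) : ℂ :=
  ∫ x : Fin N → P1 p, ∏ q ∈ pairs N, ((pdelta p (x q.1) (x q.2) : ℝ) : ℂ) ^ β
    ∂(Measure.pi fun _ => ν)

/-! ### The quadratic recurrence -/

/-- The factor `ρ_{N,k}(t,β)` appearing in the quadratic recurrence; here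
`N.choose 2 = N(N-1)/2`. -/
def rho (N k : ℕ) (t : ℝ) (β : ℂ) : ℂ :=
  if t = 0 then
    (((N : ℂ) + (N.choose 2 : ℂ) * β) * (1 - 2 * (k : ℂ) / (N : ℂ)) + 1) /
      (((N : ℂ) + (N.choose 2 : ℂ) * β) - 1)
  else
    Complex.sinh (((t : ℂ) / 2) * (((N : ℂ) + (N.choose 2 : ℂ) * β) * (1 - 2 * (k : ℂ) / (N : ℂ)) + 1)) /
      Complex.sinh (((t : ℂ) / 2) * (((N : ℂ) + (N.choose 2 : ℂ) * β) - 1))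

/-- The quadratic recurrence: `F 0 = F 1 = 1` and
`F N t β = ∑_{k=1}^{N-1} (k/N) ρ_{N,k}(t,β) F_{N-k}(t,β) F_k(t,β)` for `N ≥ 2`. -/
def F : ℕ → ℝ → ℂ → ℂ
  | 0, _, _ => 1
  | 1, _, _ => 1
  | N + 2, t, β =>
    ∑ k ∈ (Finset.Icc 1 (N + 1)).attach,
      (((k : ℕ) : ℂ) / ((N : ℂ) + 2)) * rho (N + 2) k t β *
        F (N + 2 - (k : ℕ)) t β * F (k : ℕ) t β
  decreasing_by
  all_goals
    have hk := Finset.mem_Icc.mp k.2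
    omega

/-! ### Splitting chains -/

/-- A splitting chain `Λ_0 > Λ_1 > ⋯ > Λ_L` of set partitions of the subset `I ⊆ [N]`,
beginning with the trivial partition `{I}` and ending with the partition of `I` into
singletons.  (The values `Λ ℓ` for `ℓ > L` are required to be `∅`, so that a chain is
determined by the genuine data `Λ_0, …, Λ_L`.) -/
structure SplChain (N : ℕ) (I : Finset (Fin N)) where
  L : ℕ
  Λ : ℕ → Finset (Finset (Fin N))
  nonempty_mem : ∀ ℓ ≤ L, ∀ B ∈ Λ ℓ, B.Nonempty
  subset_mem : ∀ ℓ ≤ L, ∀ B ∈ Λ ℓ, B ⊆ I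
  cover : ∀ ℓ ≤ L, ∀ i ∈ I, ∃! B, B ∈ Λ ℓ ∧ i ∈ B
  first : Λ 0 = {I}
  last : Λ L = I.image fun i => {i}
  refines : ∀ ℓ < L, ∀ B ∈ Λ (ℓ + 1), ∃ C ∈ Λ ℓ, B ⊆ C
  strict : ∀ ℓ < L, Λ (ℓ + 1) ≠ Λ ℓ
  trailing : ∀ ℓ, L < ℓ → Λ ℓ = ∅

variable {N : ℕ} {I : Finset (Fin N)}

/-- The branches of a splitting chain: the non-singleton parts,
`ℬ(𝔖) = (Λ_0 ∪ ⋯ ∪ Λ_{L-1}) \ Λ_L`. -/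
def SplChain.branches (S : SplChain N I) : Finset (Finset (Fin N)) :=
  ((Finset.range S.L).biUnion S.Λ) \ S.Λ S.L

/-- The depth `ℓ_𝔖(λ) = max {ℓ : λ ∈ Λ_ℓ}` of a branch. -/
def SplChain.depth (S : SplChain N I) (lam : Finset (Fin N)) : ℕ :=
  ((Finset.range (S.L + 1)).filter fun ℓ => lam ∈ S.Λ ℓ).sup id

/-- The degree `deg_𝔖(λ) = #{λ' ∈ Λ_{ℓ_𝔖(λ)+1} : λ' ⊆ λ}` of a branch. -/
def SplChain.degree (S : SplChain N I) (lam : Finset (Fin N)) : ℕ :=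
  ((S.Λ (S.depth lam + 1)).filter fun lam' => lam' ⊆ lam).card

/-- A splitting chain is reduced if every branch appears in exactly one partition of the
chain (namely the one at its depth). -/
def SplChain.Reduced (S : SplChain N I) : Prop :=
  ∀ lam ∈ S.branches, ∀ ℓ ≤ S.L, (lam ∈ S.Λ ℓ ↔ ℓ = S.depth lam)

/-- `e_λ(s) = #λ - 1 + ∑_{i<j, i,j ∈ λ} s_{ij}`. -/
def eexp (lam : Finset (Fin N)) (s : Fin N → Fin N → ℂ) : ℂ :=
  (lam.card : ℂ) - 1 + ∑ q ∈ (pairs N).filter fun q => q.1 ∈ lam ∧ q.2 ∈ lam, s q.1 q.2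

/-- Membership in `Ω_I`: `Re e_λ(s) > 0` for every `λ ⊆ I` with `#λ > 1`. -/
def InOmega (I : Finset (Fin N)) (s : Fin N → Fin N → ℂ) : Prop :=
  ∀ lam ⊆ I, 1 < lam.card → 0 < (eexp lam s).re


/-- The multivariate canonical partition function `𝒵_N(ℤ_p, s)` over `Fin N`-indexed tuples. -/
def ZNs (μ : Measure ℚ_[p]) [SigmaFinite μ] (X : Set ℚ_[p]) (N : ℕ)
    (s : Fin N → Fin N → ℂ) : ℂ :=
  ∫ x : Fin N → ℚ_[p], ∏ q ∈ pairs N, (‖x q.1 - x q.2‖ : ℂ) ^ s q.1 q.2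
    ∂(Measure.pi fun _ => μ.restrict X)

/-- The ball `p^v ℤ_p = {x : |x| ≤ p^{-v}}` in `ℚ_p`. -/
def pvball (v : ℤ) : Set ℚ_[p] := {x | ‖x‖ ≤ (p : ℝ) ^ (-v)}

/-- `G_N(q,β) = N! q^{(1/2)(N choose 2)β} F_N(log q, β)`. -/
def GN (N : ℕ) (β : ℂ) (q : ℝ) : ℂ :=
  (N.factorial : ℂ) * (q : ℂ) ^ ((N.choose 2 : ℂ) * β / 2) * F N (Real.log q) β

/-- `H_N(q,β)`, the efficient formula for `Z_N(ℙ¹(K),β)` as a function of `q`. -/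
def HN (N : ℕ) (β : ℂ) (q : ℝ) : ℂ :=
  (N.factorial : ℂ) * ∑ k ∈ Finset.range (N + 1),
    Complex.cosh (((Real.log q : ℂ) / 2) * ((N : ℂ) + (N.choose 2 : ℂ) * β) *
          (1 - 2 * (k : ℂ) / (N : ℂ))) /
        (2 * Complex.cosh ((Real.log q : ℂ) / 2)) ^ N *
      F (N - k) (Real.log q) β * F k (Real.log q) β

end

/-!
Split `ℤ_p` into its `p` residue balls. Points in different balls are at distance `1` and do not
interact, and each ball is a copy of `ℤ_p` scaled by `p⁻¹`. Hence the exponential generating series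
`A = ∑ Z_n / n! X ^ n` of the partition functions satisfies `A = B ^ p`, where `B` arises from `A`
by multiplying the `n`-th coefficient by `p ^ (-n - (n choose 2) β)`. Applying `X d/dX` gives
`B (X A') = p (X B') A`, and the coefficients of this identity, after the factors
`p ^ ((n choose 2) β / 2)` are split off, are the quadratic recurrence defining `F`.

For the convergence, the identity is first applied to `|x - y| ^ Re β` cut off at distances below
`p ^ (-m)`. Cutting off at `m + 1` in `A` means cutting off at `m` in `B`, and the coefficients are
nonnegative and increase with `m`, so the recurrence bounds the `n`-th one uniformly in `m` as soon
as `p * p ^ (-n - (n choose 2) Re β) < 1`, that is, `Re β > -2 / n`. Fatou's lemma lets `m → ∞`.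
-/

open PowerSeries (coeff)
open scoped NNReal PowerSeries

/-! ### Power series and quadratic recursions -/

section PowerSeriesRecursion

variable {R : Type*}

theorem coeff_mul_congr_right [Semiring R] (A : R⟦X⟧) {B C : R⟦X⟧} {n : ℕ}
    (h : ∀ m ≤ n, coeff m B = coeff m C) :
    coeff n (A * B) = coeff n (A * C) := by
  simp only [PowerSeries.coeff_mul]
  exact Finset.sum_congr rfl fun q hq => by rw [h _ (Finset.HasAntidiagonal.antidiagonal.snd_le hq)]

theorem coeff_X_mul_derivative [CommSemiring R] (A : R⟦X⟧) (n : ℕ) :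
    coeff n (PowerSeries.X * d⁄dX R A) = n * coeff n A := by
  rcases n with _ | n
  · simp
  · rw [PowerSeries.coeff_succ_X_mul, PowerSeries.coeff_derivative, mul_comm, Nat.cast_succ]

theorem coeff_X_mul_derivative_mul [CommSemiring R] (A B : R⟦X⟧) (n : ℕ) :
    coeff n (PowerSeries.X * d⁄dX R A * B) = ∑ k ∈ Finset.range (n + 1),
      k * coeff k A * coeff (n - k) B := by
  rw [PowerSeries.coeff_mul, Finset.Nat.sum_antidiagonal_eq_sum_range_succ_mk]
  simp only [coeff_X_mul_derivative]

theorem mul_X_mul_derivative_pow [CommSemiring R] (B : R⟦X⟧) (q : ℕ) :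
    B * (PowerSeries.X * d⁄dX R (B ^ q)) = q • (PowerSeries.X * d⁄dX R B * B ^ q) := by
  rcases q with _ | q
  · simp
  · rw [PowerSeries.derivative_pow, Nat.add_sub_cancel, nsmul_eq_mul]
    ring

theorem sum_mul_coeff_eq_of_coeff_eq_coeff_pow [CommSemiring R] {A B : R⟦X⟧} {q n : ℕ}
    (h : ∀ k ≤ n, coeff k A = coeff k (B ^ q)) :
    ∑ k ∈ Finset.range (n + 1), k * coeff k A * coeff (n - k) B =
      q * ∑ k ∈ Finset.range (n + 1), k * coeff k B * coeff (n - k) A := by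
  have hEuler : ∀ k ≤ n, coeff k (PowerSeries.X * d⁄dX R A) =
      coeff k (PowerSeries.X * d⁄dX R (B ^ q)) := fun k hk => by
    rw [coeff_X_mul_derivative, coeff_X_mul_derivative, h k hk]
  calc _ = coeff n (B * (PowerSeries.X * d⁄dX R A)) := by
        rw [← coeff_X_mul_derivative_mul, mul_comm]
    _ = q • coeff n (PowerSeries.X * d⁄dX R B * B ^ q) := by
        rw [coeff_mul_congr_right B hEuler, mul_X_mul_derivative_pow, map_nsmul]
    _ = _ := by
        rw [← coeff_mul_congr_right _ h, coeff_X_mul_derivative_mul, nsmul_eq_mul]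

end PowerSeriesRecursion

section QuadraticRecursionBound

variable {w : ℕ → ℝ} {q : ℝ}

theorem mul_le_of_quadratic_recursion_step {a b : ℕ → ℝ} (ha : ∀ n, 0 ≤ a n) (hab : ∀ n, a n ≤ b n)
    (ha0 : a 0 = 1) (hb0 : b 0 = 1) (hw : ∀ n, 0 ≤ w n) (hw0 : w 0 = 1) (hq : 0 ≤ q) {n : ℕ}
    (hrec : ∑ k ∈ Finset.range (n + 2), k * b k * (w (n + 1 - k) * a (n + 1 - k)) =
      q * ∑ k ∈ Finset.range (n + 2), k * (w k * a k) * b (n + 1 - k))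
    {C : ℕ → ℝ} (hC : ∀ k ≤ n, b k ≤ C k) :
    b (n + 1) * ((n + 1) * (1 - q * w (n + 1))) ≤
      q * ∑ k ∈ Finset.range n, (k + 1) * (w (k + 1) * C (k + 1)) * C (n - k) := by
  have hb n : 0 ≤ b n := (ha n).trans (hab n)
  have hlast : (n + 1) * b (n + 1) ≤
      ∑ k ∈ Finset.range (n + 2), k * b k * (w (n + 1 - k) * a (n + 1 - k)) := by
    refine le_of_eq_of_le ?_ (Finset.single_le_sum
      (fun k _ => mul_nonneg (mul_nonneg k.cast_nonneg (hb _)) (mul_nonneg (hw _) (ha _)))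
      (Finset.self_mem_range_succ (n + 1)))
    simp [hw0, ha0]
  have hfirst : ∑ k ∈ Finset.range (n + 2), k * (w k * a k) * b (n + 1 - k) ≤
      ∑ k ∈ Finset.range n, (k + 1) * (w (k + 1) * C (k + 1)) * C (n - k) +
        (n + 1) * (w (n + 1) * b (n + 1)) := by
    rw [Finset.sum_range_succ, Finset.sum_range_succ', Nat.sub_self, hb0, mul_one,
      Nat.cast_zero, zero_mul, zero_mul, add_zero, Nat.cast_succ]
    refine add_le_add (Finset.sum_le_sum fun k hk => ?_) ?_
    · have hk := Finset.mem_range.mp hk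
      have hCk : 0 ≤ C (k + 1) := (hb _).trans (hC _ hk)
      rw [Nat.add_sub_add_right, Nat.cast_succ]
      gcongr ?_ * (?_ * ?_) * ?_
      · exact hb _
      · exact mul_nonneg (by positivity) (mul_nonneg (hw _) hCk)
      · exact hw _
      · exact (hab _).trans (hC _ hk)
      · exact hC _ (Nat.sub_le _ _)
    · gcongr
      · exact hw _
      · exact hab _
  nlinarith [hlast.trans_eq hrec, mul_le_mul_of_nonneg_left hfirst hq]

theorem exists_bound_of_quadratic_recursion {a : ℕ → ℕ → ℝ} {N : ℕ} (ha : ∀ m n, 0 ≤ a m n)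
    (hmono : ∀ m n, a m n ≤ a (m + 1) n) (ha_one : ∀ m, ∀ n ≤ 1, a m n = 1) (hw : ∀ n, 0 ≤ w n)
    (hw0 : w 0 = 1) (hq : 0 ≤ q) (hqw : ∀ n, 2 ≤ n → n ≤ N → q * w n < 1)
    (hrec : ∀ m n, ∑ k ∈ Finset.range (n + 1), k * a (m + 1) k * (w (n - k) * a m (n - k)) =
      q * ∑ k ∈ Finset.range (n + 1), k * (w k * a m k) * a (m + 1) (n - k))
    {n : ℕ} (hn : n ≤ N) : ∃ C, ∀ m, a m n ≤ C := by
  induction n using Nat.strong_induction_on with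
  | _ n ih =>
    rcases le_or_gt n 1 with h1 | h1
    · exact ⟨1, fun m => (ha_one m n h1).le⟩
    choose! C hC using fun k (hk : k < n) => ih k hk (hk.le.trans hn)
    obtain ⟨n, rfl⟩ : ∃ l, n = l + 1 := ⟨n - 1, by omega⟩
    have hgap : 0 < ((n : ℝ) + 1) * (1 - q * w (n + 1)) :=
      mul_pos (by positivity) (sub_pos.mpr (hqw _ h1 hn))
    exact ⟨_, fun m => (hmono m _).trans <| (le_div_iff₀ hgap).mpr <|
      mul_le_of_quadratic_recursion_step (ha m) (hmono m) (ha_one m 0 zero_le_one)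
        (ha_one _ 0 zero_le_one) hw hw0 hq (hrec m _) fun k hk => hC k (Nat.lt_succ_of_le hk) _⟩

end QuadraticRecursionBound

/-! ### Partition functions -/

section BoltzmannWeight

variable {X 𝕜 : Type*} [RCLike 𝕜] (φ : X → X → 𝕜)

/-- The Boltzmann weight of a configuration `x` of particles indexed by `ι` with pair interaction
`φ`: the product of `φ (x i) (x j)` over all pairs `i < j`. -/
def boltzmannWeight {ι : Type*} [Fintype ι] [LinearOrder ι] (x : ι → X) : 𝕜 :=
  ∏ q : ι × ι with q.1 < q.2, φ (x q.1) (x q.2)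

/-- `φ` does not see pairs with one particle in `s` and the other one in `t`. -/
def NonInteracting (s t : Set X) : Prop :=
  ∀ x ∈ s, ∀ y ∈ t, φ x y = 1 ∧ φ y x = 1

variable {ι κ : Type*} [Fintype ι] [LinearOrder ι] [Fintype κ] [LinearOrder κ]

theorem boltzmannWeight_eq_prod_prod (x : ι → X) :
    boltzmannWeight φ x = ∏ i, ∏ j, if i < j then φ (x i) (x j) else 1 := by
  rw [boltzmannWeight, Finset.prod_filter, Fintype.prod_prod_type]

theorem boltzmannWeight_comp_orderIso (e : ι ≃o κ) (x : κ → X) :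
    boltzmannWeight φ (x ∘ e) = boltzmannWeight φ x := by
  simp only [boltzmannWeight_eq_prod_prod]
  refine Fintype.prod_equiv e.toEquiv _ _ fun i => Fintype.prod_equiv e.toEquiv _ _ fun j => ?_
  simp

theorem boltzmannWeight_eq_mul_of_nonInteracting (P : ι → Prop) [DecidablePred P] {s t : Set X}
    (hst : NonInteracting φ s t) {x : ι → X} (hs : ∀ i, P i → x i ∈ s)
    (ht : ∀ i, ¬P i → x i ∈ t) :
    boltzmannWeight φ x = boltzmannWeight φ (fun i : {i // P i} => x i) *
      boltzmannWeight φ (fun i : {i // ¬P i} => x i) := by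
  simp only [boltzmannWeight_eq_prod_prod, ← Fintype.prod_subtype_mul_prod_subtype P]
  have cross (i : {i // P i}) (j : {i // ¬P i}) : φ (x i) (x j) = 1 ∧ φ (x j) (x i) = 1 :=
    hst _ (hs i i.2) _ (ht j j.2)
  simp [(cross _ _).1, (cross _ _).2]

theorem card_pairs (n : ℕ) : (pairs n).card = n.choose 2 := by
  have hrow (i : Fin n) : (Finset.univ.filter fun j => i < j).card = n - 1 - i := by
    rw [Finset.filter_lt_eq_Ioi, Fin.card_Ioi]
  rw [pairs, Finset.card_filter, Fintype.sum_prod_type]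
  simp only [← Finset.card_filter, hrow]
  rw [Fin.sum_univ_eq_sum_range (fun i => n - 1 - i), Finset.sum_range_reflect (fun i => i),
    Finset.sum_range_id, Nat.choose_two_right]

theorem boltzmannWeight_const_mul (c : 𝕜) {n : ℕ} (x : Fin n → X) :
    boltzmannWeight (fun y z => c * φ y z) x = c ^ n.choose 2 * boltzmannWeight φ x := by
  rw [← card_pairs, boltzmannWeight, Finset.prod_mul_distrib, Finset.prod_const]
  rfl

theorem boltzmannWeight_eq_one_of_subsingleton [Subsingleton ι] (x : ι → X) :
    boltzmannWeight φ x = 1 :=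
  Finset.prod_eq_one fun q hq =>
    absurd (Finset.mem_filter.mp hq).2 (by simp [Subsingleton.elim q.1 q.2])

section Monotone

variable {φ φ' : X → X → ℝ}

theorem boltzmannWeight_nonneg (h0 : ∀ x y, 0 ≤ φ x y) (x : ι → X) : 0 ≤ boltzmannWeight φ x :=
  Finset.prod_nonneg fun _ _ => h0 _ _

theorem boltzmannWeight_mono (h0 : ∀ x y, 0 ≤ φ x y) (h : ∀ x y, φ x y ≤ φ' x y) (x : ι → X) :
    boltzmannWeight φ x ≤ boltzmannWeight φ' x :=
  Finset.prod_le_prod (fun _ _ => h0 _ _) fun _ _ => h _ _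

end Monotone

variable {φ} [MeasurableSpace X]

theorem measurable_boltzmannWeight (hφ : Measurable fun q : X × X => φ q.1 q.2) :
    Measurable fun x : ι → X => boltzmannWeight φ x :=
  Finset.measurable_prod _ fun q _ =>
    hφ.comp (f := fun x : ι → X => (x q.1, x q.2))
      ((measurable_pi_apply q.1).prodMk (measurable_pi_apply q.2))

end BoltzmannWeight

section Superposition

variable {ι : Type*} [Fintype ι]

instance {X : ι → Type*} [∀ i, MeasurableSpace (X i)] (S : Finset ι) [∀ i, Decidable (i ∈ S)]
    (ν₁ ν₂ : ∀ i, Measure (X i)) [∀ i, SigmaFinite (ν₁ i)] [∀ i, SigmaFinite (ν₂ i)] (i : ι) :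
    SigmaFinite (S.piecewise ν₁ ν₂ i) := by
  rw [Finset.piecewise]
  split_ifs <;> infer_instance

theorem pi_add_eq_sum_pi_piecewise [DecidableEq ι] {X : ι → Type*} [∀ i, MeasurableSpace (X i)]
    (ν₁ ν₂ : ∀ i, Measure (X i)) [∀ i, SigmaFinite (ν₁ i)] [∀ i, SigmaFinite (ν₂ i)] :
    Measure.pi (fun i => ν₁ i + ν₂ i) = ∑ S : Finset ι, Measure.pi (S.piecewise ν₁ ν₂) := by
  have (i : ι) : SigmaFinite (ν₁ i + ν₂ i) := inferInstance
  refine Measure.pi_eq (μ := fun i => ν₁ i + ν₂ i) fun s _ => ?_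
  simp only [Measure.finsetSum_apply, Measure.pi_pi, Measure.add_apply, Finset.prod_add,
    Finset.powerset_univ]
  refine Finset.sum_congr rfl fun S _ => ?_
  rw [← Finset.prod_mul_prod_compl S, Finset.compl_eq_univ_sdiff]
  congr 1 <;> refine Finset.prod_congr rfl fun i hi => ?_
  · rw [Finset.piecewise_eq_of_mem _ _ _ hi]
  · rw [Finset.piecewise_eq_of_notMem _ _ _ (Finset.mem_sdiff.mp hi).2]

theorem pi_nnreal_smul {X : Type*} [MeasurableSpace X] (c : ℝ≥0) (ν : Measure X) [SigmaFinite ν] :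
    Measure.pi (fun _ : ι => c • ν) = c ^ Fintype.card ι • Measure.pi fun _ : ι => ν :=
  Measure.pi_eq fun s _ => by
    simp only [Measure.smul_apply, Measure.pi_pi, ENNReal.smul_def, smul_eq_mul,
      Finset.prod_mul_distrib, Finset.prod_const, Finset.card_univ, ENNReal.coe_pow]

end Superposition

section PartitionFunction

variable {X 𝕜 : Type*} [MeasurableSpace X] [RCLike 𝕜] (φ : X → X → 𝕜)

/-- The canonical partition function of `n` particles with pair interaction `φ`, each distributed
according to `ν`. -/
noncomputable def partitionFunction (ν : Measure X) (n : ℕ) : 𝕜 :=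
  ∫ x : Fin n → X, boltzmannWeight φ x ∂Measure.pi fun _ => ν

/-- The grand canonical partition function: the exponential generating series of the canonical
partition functions. -/
noncomputable def grandSeries (ν : Measure X) : 𝕜⟦X⟧ :=
  PowerSeries.mk fun n => partitionFunction φ ν n / n.factorial

/-- The canonical partition function of `n` particles converges absolutely. -/
abbrev Converges (ν : Measure X) (n : ℕ) : Prop :=
  Integrable (fun x : Fin n → X => boltzmannWeight φ x) (Measure.pi fun _ => ν)

@[simp] theorem coeff_grandSeries (ν : Measure X) (n : ℕ) :
    coeff n (grandSeries φ ν) = partitionFunction φ ν n / n.factorial :=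
  PowerSeries.coeff_mk _ _

variable {ι : Type*} [Fintype ι] [LinearOrder ι] (ν ν₁ ν₂ : Measure X) [SigmaFinite ν₁]
  [SigmaFinite ν₂]

theorem integral_boltzmannWeight_eq_partitionFunction [SigmaFinite ν] {n : ℕ}
    (hn : Fintype.card ι = n) :
    ∫ x : ι → X, boltzmannWeight φ x ∂Measure.pi (fun _ => ν) = partitionFunction φ ν n := by
  let e := Fintype.orderIsoFinOfCardEq ι hn
  have hmp := measurePreserving_piCongrLeft (fun _ : ι => ν) e.toEquiv
  rw [partitionFunction, ← hmp.integral_comp']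
  refine integral_congr_ae (.of_forall fun x => ?_)
  beta_reduce
  rw [← boltzmannWeight_comp_orderIso φ e]
  congr 1
  ext i
  exact (MeasurableEquiv.piCongrLeft_apply_apply e.toEquiv (β := fun _ => X) x i)

variable {φ ν₁ ν₂} {s t : Set X}

theorem integral_boltzmannWeight_pi_eq_mul (hst : NonInteracting φ s t) (P : ι → Prop)
    [DecidablePred P] (ρ : ι → Measure X) [∀ i, SigmaFinite (ρ i)]
    (hs : ∀ i, P i → ∀ᵐ x ∂ρ i, x ∈ s) (ht : ∀ i, ¬P i → ∀ᵐ x ∂ρ i, x ∈ t) :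
    ∫ x, boltzmannWeight φ x ∂Measure.pi ρ =
      (∫ x, boltzmannWeight φ x ∂Measure.pi fun i : {i // P i} => ρ i) *
        ∫ x, boltzmannWeight φ x ∂Measure.pi fun i : {i // ¬P i} => ρ i := by
  have hmem : ∀ᵐ x ∂Measure.pi ρ, ∀ i, (P i → x i ∈ s) ∧ (¬P i → x i ∈ t) := by
    refine ae_all_iff.mpr fun i => ?_
    have hi : ∀ᵐ y ∂ρ i, (P i → y ∈ s) ∧ (¬P i → y ∈ t) := by
      by_cases hP : P i
      · simpa [hP] using hs i hP
      · simpa [hP] using ht i hP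
    exact Measure.tendsto_eval_ae_ae.eventually hi
  rw [← integral_prod_mul, ← (measurePreserving_piEquivPiSubtypeProd ρ P).integral_comp']
  exact integral_congr_ae <| hmem.mono fun x hx =>
    boltzmannWeight_eq_mul_of_nonInteracting φ P hst (fun i => (hx i).1) fun i => (hx i).2

theorem integral_boltzmannWeight_pi_piecewise (hst : NonInteracting φ s t)
    (hs : ∀ᵐ x ∂ν₁, x ∈ s) (ht : ∀ᵐ x ∂ν₂, x ∈ t) (S : Finset ι) :
    ∫ x, boltzmannWeight φ x ∂Measure.pi (S.piecewise (fun _ => ν₁) fun _ => ν₂) =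
      partitionFunction φ ν₁ S.card * partitionFunction φ ν₂ (Fintype.card ι - S.card) := by
  rw [integral_boltzmannWeight_pi_eq_mul hst (· ∈ S) _ (fun i hi => by simpa [hi] using hs)
    fun i hi => by simpa [hi] using ht]
  have hin : (fun i : {i // i ∈ S} => S.piecewise (fun _ => ν₁) (fun _ => ν₂) i) = fun _ => ν₁ :=
    funext fun i => S.piecewise_eq_of_mem _ _ i.2
  have hout : (fun i : {i // i ∉ S} => S.piecewise (fun _ => ν₁) (fun _ => ν₂) i) = fun _ => ν₂ :=
    funext fun i => S.piecewise_eq_of_notMem _ _ i.2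
  rw [hin, hout]
  congr 1
  · convert integral_boltzmannWeight_eq_partitionFunction φ ν₁ (Fintype.card_coe S)
  · exact integral_boltzmannWeight_eq_partitionFunction φ ν₂ (by simp [Fintype.card_subtype_compl])

theorem coeff_grandSeries_add (hst : NonInteracting φ s t)
    (hs : ∀ᵐ x ∂ν₁, x ∈ s) (ht : ∀ᵐ x ∂ν₂, x ∈ t) {n : ℕ} (hn : Converges φ (ν₁ + ν₂) n) :
    coeff n (grandSeries φ (ν₁ + ν₂)) = coeff n (grandSeries φ ν₁ * grandSeries φ ν₂) := by
  have hsum := pi_add_eq_sum_pi_piecewise (fun _ : Fin n => ν₁) fun _ => ν₂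
  rw [Converges, hsum, integrable_finsetSum_measure] at hn
  have hZ : partitionFunction φ (ν₁ + ν₂) n = ∑ k ∈ Finset.range (n + 1),
      n.choose k • (partitionFunction φ ν₁ k * partitionFunction φ ν₂ (n - k)) := by
    rw [partitionFunction, hsum, integral_finsetSum_measure hn]
    simp only [integral_boltzmannWeight_pi_piecewise hst hs ht, Fintype.card_fin]
    rw [← Finset.powerset_univ, Finset.sum_powerset_apply_card
      (fun k => partitionFunction φ ν₁ k * partitionFunction φ ν₂ (n - k)), Finset.card_univ,
      Fintype.card_fin]
  rw [coeff_grandSeries, PowerSeries.coeff_mul, Finset.Nat.sum_antidiagonal_eq_sum_range_succ_mk,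
    hZ, Finset.sum_div]
  refine Finset.sum_congr rfl fun k hk => ?_
  have hkn : k ≤ n := Nat.lt_succ_iff.mp (Finset.mem_range.mp hk)
  have hfac : (n.factorial : 𝕜) ≠ 0 := by exact_mod_cast n.factorial_ne_zero
  simp only [coeff_grandSeries, nsmul_eq_mul, Nat.cast_choose 𝕜 hkn]
  field_simp

theorem partitionFunction_of_le_one [IsProbabilityMeasure ν] {n : ℕ} (hn : n ≤ 1) :
    partitionFunction φ ν n = 1 := by
  have : Subsingleton (Fin n) := Fin.subsingleton_iff_le_one.mpr hn
  simp [partitionFunction, boltzmannWeight_eq_one_of_subsingleton]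

theorem grandSeries_zero_measure : grandSeries φ (0 : Measure X) = 1 := by
  ext n
  rcases n with _ | n
  · rw [coeff_grandSeries, partitionFunction, Measure.pi_of_empty]
    simp [boltzmannWeight_eq_one_of_subsingleton]
  · have hpi : (Measure.pi fun _ : Fin (n + 1) => (0 : Measure X)) = 0 :=
      Measure.pi_eq fun s _ => by simp
    simp [partitionFunction, hpi, PowerSeries.coeff_one]

variable (φ)

theorem partitionFunction_nnreal_smul [SigmaFinite ν] (c : ℝ≥0) (n : ℕ) :
    partitionFunction φ (c • ν) n = c ^ n • partitionFunction φ ν n := by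
  rw [partitionFunction, pi_nnreal_smul, Fintype.card_fin, integral_smul_nnreal_measure,
    partitionFunction]

theorem partitionFunction_const_mul (c : 𝕜) (n : ℕ) :
    partitionFunction (fun x y => c * φ x y) ν n = c ^ n.choose 2 * partitionFunction φ ν n := by
  simp only [partitionFunction, boltzmannWeight_const_mul, integral_const_mul]

theorem partitionFunction_map {Y : Type*} [MeasurableSpace Y] (ρ : Measure Y) [IsFiniteMeasure ρ]
    {f : Y → X} (hf : Measurable f) (hφ : Measurable fun q : X × X => φ q.1 q.2) (n : ℕ) :
    partitionFunction φ (ρ.map f) n = partitionFunction (fun x y => φ (f x) (f y)) ρ n := by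
  have hpi : Measurable fun (y : Fin n → Y) i => f (y i) :=
    measurable_pi_lambda _ fun i => hf.comp (measurable_pi_apply i)
  rw [partitionFunction, ← Measure.pi_map_pi fun _ => hf.aemeasurable,
    integral_map hpi.aemeasurable (measurable_boltzmannWeight hφ).aestronglyMeasurable]
  rfl

end PartitionFunction

section Mixture

variable {X 𝕜 : Type*} [MeasurableSpace X] [RCLike 𝕜] {φ : X → X → 𝕜}

theorem Converges.of_add_right {ν₁ ν₂ : Measure X} [SigmaFinite ν₁] [SigmaFinite ν₂] {n : ℕ}
    (h : Converges φ (ν₁ + ν₂) n) : Converges φ ν₂ n := by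
  rw [Converges, pi_add_eq_sum_pi_piecewise (fun _ : Fin n => ν₁) fun _ => ν₂,
    integrable_finsetSum_measure] at h
  simpa using h ∅ (Finset.mem_univ _)

theorem coeff_grandSeries_sum {α : Type*} {D : α → Set X} {ν : α → Measure X}
    [∀ i, IsFiniteMeasure (ν i)] (hν : ∀ i, ∀ᵐ x ∂ν i, x ∈ D i) {T : Finset α}
    (hD : (T : Set α).Pairwise fun i j => NonInteracting φ (D i) (D j)) {n : ℕ}
    (hn : ∀ m ≤ n, Converges φ (∑ i ∈ T, ν i) m) :
    coeff n (grandSeries φ (∑ i ∈ T, ν i)) = coeff n (∏ i ∈ T, grandSeries φ (ν i)) := by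
  classical
  induction T using Finset.induction_on generalizing n with
  | empty => simp [grandSeries_zero_measure]
  | insert a T ha ih =>
    have hrest : ∀ᵐ x ∂∑ i ∈ T, ν i, x ∈ ⋃ i ∈ T, D i := by
      rw [ae_finsetSum_measure_iff]
      exact fun i hi => (hν i).mono fun x hx => Set.mem_biUnion hi hx
    have hcross : NonInteracting φ (D a) (⋃ i ∈ T, D i) := fun x hx y hy => by
      obtain ⟨i, hi, hyi⟩ := Set.mem_iUnion₂.mp hy
      exact hD (by simp) (by simp [hi]) (ne_of_mem_of_not_mem hi ha).symm x hx y hyi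
    simp only [Finset.sum_insert ha] at hn
    rw [Finset.sum_insert ha, Finset.prod_insert ha,
      coeff_grandSeries_add hcross (hν a) hrest (hn n le_rfl)]
    exact coeff_mul_congr_right _ fun m hm =>
      ih (hD.mono (by simp)) fun k hk => (hn k (hk.trans hm)).of_add_right

theorem converges_of_norm_le (hφ : Measurable fun q : X × X => φ q.1 q.2) {ν : Measure X}
    [IsFiniteMeasure ν] {s : Set X} (hs : ∀ᵐ x ∂ν, x ∈ s) {C : ℝ}
    (hC : ∀ x ∈ s, ∀ y ∈ s, ‖φ x y‖ ≤ C) (n : ℕ) : Converges φ ν n := by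
  have hmem : ∀ᵐ x ∂Measure.pi fun _ : Fin n => ν, ∀ i, x i ∈ s :=
    ae_all_iff.mpr fun i => Measure.tendsto_eval_ae_ae.eventually hs
  refine .of_bound (measurable_boltzmannWeight hφ).aestronglyMeasurable (C ^ (pairs n).card)
    (hmem.mono fun x hx => ?_)
  rw [boltzmannWeight, norm_prod, ← Finset.prod_const]
  exact Finset.prod_le_prod (fun _ _ => norm_nonneg _) fun q _ => hC _ (hx _) _ (hx _)

end Mixture

section MonotoneConvergence

variable {X : Type*} [MeasurableSpace X] {ν : Measure X}

theorem converges_of_tendsto_of_partitionFunction_le {𝕜 : Type*} [RCLike 𝕜] {φ : X → X → 𝕜}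
    {Φ : ℕ → X → X → ℝ} (hφ : Measurable fun q : X × X => φ q.1 q.2)
    (hΦ : ∀ m, Measurable fun q : X × X => Φ m q.1 q.2) (h0 : ∀ m x y, 0 ≤ Φ m x y)
    (hlim : ∀ x y, Filter.Tendsto (fun m => Φ m x y) Filter.atTop (nhds ‖φ x y‖)) {n : ℕ}
    (hint : ∀ m, Converges (Φ m) ν n) {C : ℝ} (hC : ∀ m, partitionFunction (Φ m) ν n ≤ C) :
    Converges φ ν n := by
  refine ⟨(measurable_boltzmannWeight hφ).aestronglyMeasurable, ?_⟩
  let w m (x : Fin n → X) : ENNReal := ENNReal.ofReal (boltzmannWeight (Φ m) x)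
  have hw : ∀ x, Filter.liminf (fun m => w m x) Filter.atTop = ‖boltzmannWeight φ x‖ₑ := fun x => by
    rw [← ofReal_norm, boltzmannWeight, norm_prod]
    exact (ENNReal.tendsto_ofReal (tendsto_finsetProd _ fun q _ => hlim _ _)).liminf_eq
  calc ∫⁻ x, ‖boltzmannWeight φ x‖ₑ ∂Measure.pi (fun _ => ν)
      = ∫⁻ x, Filter.liminf (fun m => w m x) Filter.atTop ∂Measure.pi fun _ => ν := by
        simp only [hw]
    _ ≤ Filter.liminf (fun m => ∫⁻ x, w m x ∂Measure.pi fun _ => ν) Filter.atTop :=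
        lintegral_liminf_le fun m => (measurable_boltzmannWeight (hΦ m)).ennreal_ofReal
    _ ≤ ENNReal.ofReal C := by
        refine Filter.liminf_le_of_le (by isBoundedDefault) fun b hb => ?_
        obtain ⟨m, hm⟩ := hb.exists
        rw [← ofReal_integral_eq_lintegral_ofReal (hint m)
          (.of_forall (boltzmannWeight_nonneg (h0 m)))] at hm
        exact hm.trans (ENNReal.ofReal_le_ofReal (hC m))
    _ < ⊤ := ENNReal.ofReal_lt_top

end MonotoneConvergence

/-! ### Radial interactions on the `p`-adic integers -/

section ResidueBalls

variable {p : ℕ} [Fact p.Prime]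

theorem Zball_eq_closedBall : Zball p = Metric.closedBall 0 1 := by
  ext x
  simp [Zball]

theorem measurableSet_Zball : MeasurableSet (Zball p) :=
  Zball_eq_closedBall (p := p) ▸ measurableSet_closedBall

instance (μ : Measure ℚ_[p]) [IsFiniteMeasureOnCompacts μ] (a : ℚ_[p]) (r : ℝ) :
    IsFiniteMeasure (μ.restrict (Metric.ball a r)) :=
  isFiniteMeasure_restrict.mpr Metric.isBounded_ball.measure_lt_top.ne

instance (μ : Measure ℚ_[p]) [IsFiniteMeasureOnCompacts μ] :
    IsFiniteMeasure (μ.restrict (Zball p)) := by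
  rw [Zball_eq_closedBall]
  exact isFiniteMeasure_restrict.mpr Metric.isBounded_closedBall.measure_lt_top.ne

theorem norm_natCast_sub_natCast_of_lt {a b : ℕ} (ha : a < p) (hb : b < p) (hab : a ≠ b) :
    ‖(a : ℚ_[p]) - b‖ = 1 := by
  have hdvd : ¬((p : ℤ) ∣ (a : ℤ) - b) := fun h => by
    have := Int.eq_zero_of_abs_lt_dvd h (by rw [abs_lt]; constructor <;> omega)
    omega
  have hge := (Padic.norm_intCast_lt_one_iff (p := p)).not.mpr hdvd
  have hle := Padic.norm_int_le_one (p := p) ((a : ℤ) - b)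
  push_cast at hge hle
  exact le_antisymm hle (not_lt.mp hge)

theorem norm_sub_eq_one_of_mem_ball {a b : ℕ} (ha : a < p) (hb : b < p) (hab : a ≠ b)
    {x y : ℚ_[p]} (hx : x ∈ Metric.ball (a : ℚ_[p]) 1) (hy : y ∈ Metric.ball (b : ℚ_[p]) 1) :
    ‖x - y‖ = 1 := by
  have hab1 := norm_natCast_sub_natCast_of_lt ha hb hab
  rw [mem_ball_iff_norm] at hx
  rw [mem_ball_iff_norm'] at hy
  have hsmall : ‖x - a + (b - y)‖ < ‖(a : ℚ_[p]) - b‖ :=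
    hab1 ▸ (Padic.nonarchimedean _ _).trans_lt (max_lt hx hy)
  rw [show x - y = x - a + (b - y) + (a - b) by ring,
    Padic.add_eq_max_of_ne hsmall.ne, max_eq_right hsmall.le, hab1]

theorem pairwiseDisjoint_ball_natCast :
    (Finset.range p : Set ℕ).PairwiseDisjoint fun a => Metric.ball (a : ℚ_[p]) 1 :=
  fun a ha b hb hab => Set.disjoint_left.mpr fun x hxa hxb => by
    have hself : ‖x - x‖ = 1 :=
      norm_sub_eq_one_of_mem_ball (Finset.mem_range.mp ha) (Finset.mem_range.mp hb) hab hxa hxb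
    simp at hself

theorem ball_natCast_subset_Zball (a : ℕ) : Metric.ball (a : ℚ_[p]) 1 ⊆ Zball p := by
  have ha : ‖(a : ℚ_[p])‖ ≤ 1 := mod_cast Padic.norm_int_le_one (p := p) a
  rw [Zball_eq_closedBall, IsUltrametricDist.closedBall_eq_of_mem
    (mem_closedBall_zero_iff.mpr ha)]
  exact Metric.ball_subset_closedBall

theorem Zball_eq_biUnion_ball : Zball p = ⋃ a ∈ Finset.range p, Metric.ball (a : ℚ_[p]) 1 := by
  refine (Set.iUnion₂_subset fun a _ => ball_natCast_subset_Zball a).antisymm' fun x hx => ?_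
  obtain ⟨a, ha, hmem⟩ := PadicInt.exists_mem_range (⟨x, hx⟩ : ℤ_[p])
  rw [PadicInt.maximalIdeal_eq_span_p, Ideal.mem_span_singleton,
    ← PadicInt.norm_lt_one_iff_dvd] at hmem
  exact Set.mem_biUnion (Finset.mem_range.mpr ha) (mem_ball_iff_norm.mpr hmem)

theorem restrict_Zball_eq_sum (μ : Measure ℚ_[p]) :
    μ.restrict (Zball p) = ∑ a ∈ Finset.range p, μ.restrict (Metric.ball (a : ℚ_[p]) 1) := by
  rw [Zball_eq_biUnion_ball, Measure.restrict_biUnion_finset pairwiseDisjoint_ball_natCast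
    fun _ => measurableSet_ball]
  exact Measure.sum_coe_finset _ fun a : ℕ => μ.restrict (Metric.ball (a : ℚ_[p]) 1)

theorem preimage_natCast_add_mul_ball (a : ℕ) :
    (fun y : ℚ_[p] => a + p * y) ⁻¹' Metric.ball (a : ℚ_[p]) 1 = Zball p := by
  ext y
  have hp : (0 : ℝ) < p := mod_cast (Fact.out : p.Prime).pos
  have h := Padic.norm_lt_pow_iff_norm_le_pow_sub_one y 1
  simp only [zpow_one, sub_self, zpow_zero] at h
  rw [Set.mem_preimage, mem_ball_iff_norm, add_sub_cancel_left, norm_mul, Padic.norm_p,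
    inv_mul_lt_iff₀ hp, mul_one, h]
  rfl

variable (μ : Measure ℚ_[p]) [μ.IsAddHaarMeasure]

theorem measure_Zball_eq_mul_measure_ball (a : ℕ) :
    μ (Zball p) = p * μ (Metric.ball (a : ℚ_[p]) 1) := by
  rw [Zball_eq_biUnion_ball, measure_biUnion_finset pairwiseDisjoint_ball_natCast
    fun _ _ => measurableSet_ball]
  simp [Measure.addHaar_ball_center]

theorem map_natCast_add_mul_eq_smul (a : ℕ) :
    μ.map (fun y => (a : ℚ_[p]) + p * y) = (p : ℝ≥0) • μ := by
  have hp0 : (p : ℚ_[p]) ≠ 0 := mod_cast (Fact.out : p.Prime).ne_zero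
  let e : ℚ_[p] ≃L[ℚ_[p]] ℚ_[p] := .smulLeft (Units.mk0 (p : ℚ_[p]) hp0)
  let c := Measure.addHaarScalarFactor (μ.map e) μ
  have hscale : μ.map (fun y => (a : ℚ_[p]) + p * y) = c • μ :=
    calc _ = (μ.map e).map ((a : ℚ_[p]) + ·) :=
          (Measure.map_map (measurable_const_add _) (measurable_const_mul _)).symm
      _ = μ.map e := map_add_left_eq_self _ _
      _ = c • μ := Measure.isAddLeftInvariant_eq_smul _ _
  have hball := congrArg (· (Metric.ball (a : ℚ_[p]) 1)) hscale
  simp only [Measure.map_apply (show Measurable fun y : ℚ_[p] => (a : ℚ_[p]) + p * y by fun_prop)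
    measurableSet_ball, preimage_natCast_add_mul_ball, measure_Zball_eq_mul_measure_ball μ a,
    Measure.smul_apply, ENNReal.smul_def, smul_eq_mul] at hball
  have hc : (p : ENNReal) = c := (ENNReal.mul_left_inj (Metric.measure_ball_pos μ _ one_pos).ne'
    Metric.isBounded_ball.measure_lt_top.ne).mp hball
  rw [hscale, show c = p from mod_cast hc.symm]

theorem restrict_ball_eq_smul_map (a : ℕ) :
    μ.restrict (Metric.ball (a : ℚ_[p]) 1) =
      (p : ℝ≥0)⁻¹ • (μ.restrict (Zball p)).map fun y => (a : ℚ_[p]) + p * y := by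
  have hp0 : (p : ℝ≥0) ≠ 0 := mod_cast (Fact.out : p.Prime).ne_zero
  rw [← preimage_natCast_add_mul_ball a, ← Measure.restrict_map (by fun_prop) measurableSet_ball,
    map_natCast_add_mul_eq_smul, Measure.restrict_smul, smul_smul, inv_mul_cancel₀ hp0, one_smul]

end ResidueBalls

section ShrinkFactor

/-- The factor by which the `k`-particle partition function shrinks when `ℤ_p` is replaced by one
of its residue balls, for an interaction multiplied by `c` under division of distances by `p`. -/
noncomputable def shrinkFactor {𝕜 : Type*} [DivisionRing 𝕜] (p : ℕ) (c : 𝕜) (k : ℕ) : 𝕜 :=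
  (p : 𝕜)⁻¹ ^ k * c ^ k.choose 2

theorem shrinkFactor_nonneg (p : ℕ) {c : ℝ} (hc : 0 ≤ c) (n : ℕ) : 0 ≤ shrinkFactor p c n := by
  unfold shrinkFactor
  positivity

end ShrinkFactor

section RadialInteraction

variable {p : ℕ} [Fact p.Prime] {𝕜 : Type*} [RCLike 𝕜]

/-- The pair interaction on `ℚ_p` that depends on the distance alone, through the profile `ψ`. -/
noncomputable def radial (p : ℕ) [Fact p.Prime] (ψ : ℝ → 𝕜) (x y : ℚ_[p]) : 𝕜 := ψ ‖x - y‖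

variable {ψ : ℝ → 𝕜}

theorem measurable_radial (hψ : Measurable ψ) :
    Measurable fun q : ℚ_[p] × ℚ_[p] => radial p ψ q.1 q.2 :=
  hψ.comp (measurable_fst.sub measurable_snd).norm

theorem nonInteracting_radial (h1 : ψ 1 = 1) {a b : ℕ} (ha : a < p) (hb : b < p) (hab : a ≠ b) :
    NonInteracting (radial p ψ) (Metric.ball (a : ℚ_[p]) 1) (Metric.ball (b : ℚ_[p]) 1) :=
  fun x hx y hy => by
    have hdist := norm_sub_eq_one_of_mem_ball ha hb hab hx hy
    constructor <;> simp only [radial, norm_sub_rev y x, hdist, h1]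

theorem converges_radial (μ : Measure ℚ_[p]) [IsFiniteMeasureOnCompacts μ] (hψ : Measurable ψ)
    {C : ℝ} (hC : ∀ r, 0 ≤ r → r ≤ 1 → ‖ψ r‖ ≤ C) (n : ℕ) :
    Converges (radial p ψ) (μ.restrict (Zball p)) n := by
  refine converges_of_norm_le (measurable_radial hψ) (ae_restrict_mem measurableSet_Zball)
    (fun x hx y hy => hC _ (norm_nonneg _) ?_) n
  rw [← dist_eq_norm]
  exact (dist_triangle_max x 0 y).trans (by simpa using ⟨hx, hy⟩)

variable (μ : Measure ℚ_[p]) [μ.IsAddHaarMeasure]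

theorem grandSeries_radial_restrict_ball (hψ : Measurable ψ) (a : ℕ) :
    grandSeries (radial p ψ) (μ.restrict (Metric.ball (a : ℚ_[p]) 1)) =
      PowerSeries.rescale (p : 𝕜)⁻¹
        (grandSeries (radial p fun r => ψ ((p : ℝ)⁻¹ * r)) (μ.restrict (Zball p))) := by
  have hzoom : (fun x y : ℚ_[p] => radial p ψ (a + p * x) (a + p * y)) =
      radial p fun r => ψ ((p : ℝ)⁻¹ * r) := by
    ext x y
    rw [radial, radial, add_sub_add_left_eq_sub, ← mul_sub, norm_mul, Padic.norm_p]
  ext n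
  rw [PowerSeries.coeff_rescale, coeff_grandSeries, coeff_grandSeries, restrict_ball_eq_smul_map,
    partitionFunction_nnreal_smul, partitionFunction_map _ _ (by fun_prop) (measurable_radial hψ),
    hzoom, mul_div_assoc']
  simp [NNReal.smul_def, RCLike.real_smul_eq_coe_mul]

theorem coeff_grandSeries_radial_eq_coeff_pow (hψ : Measurable ψ) (h1 : ψ 1 = 1) {n : ℕ}
    (hn : ∀ m ≤ n, Converges (radial p ψ) (μ.restrict (Zball p)) m) :
    coeff n (grandSeries (radial p ψ) (μ.restrict (Zball p))) =
      coeff n (PowerSeries.rescale (p : 𝕜)⁻¹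
        (grandSeries (radial p fun r => ψ ((p : ℝ)⁻¹ * r)) (μ.restrict (Zball p))) ^ p) := by
  have hballs : (Finset.range p : Set ℕ).Pairwise fun a b =>
      NonInteracting (radial p ψ) (Metric.ball (a : ℚ_[p]) 1) (Metric.ball (b : ℚ_[p]) 1) :=
    fun a ha b hb => nonInteracting_radial h1 (Finset.mem_range.mp ha) (Finset.mem_range.mp hb)
  have hsum := restrict_Zball_eq_sum μ
  rw [hsum] at hn
  have hprod := coeff_grandSeries_sum (fun a => ae_restrict_mem measurableSet_ball) hballs hn
  rwa [← hsum, Finset.prod_congr rfl fun a _ => grandSeries_radial_restrict_ball μ hψ a,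
    Finset.prod_const, Finset.card_range] at hprod

theorem quadratic_recurrence_radial (hψ : Measurable ψ) (h1 : ψ 1 = 1) {ψ' : ℝ → 𝕜} {c : 𝕜}
    (hc : ∀ r, 0 ≤ r → ψ ((p : ℝ)⁻¹ * r) = c * ψ' r) {n : ℕ}
    (hn : ∀ m ≤ n, Converges (radial p ψ) (μ.restrict (Zball p)) m) :
    let Z k := coeff k (grandSeries (radial p ψ) (μ.restrict (Zball p)))
    let Z' k := coeff k (grandSeries (radial p ψ') (μ.restrict (Zball p)))
    ∑ k ∈ Finset.range (n + 1), k * Z k * (shrinkFactor p c (n - k) * Z' (n - k)) =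
      p * ∑ k ∈ Finset.range (n + 1), k * (shrinkFactor p c k * Z' k) * Z (n - k) := by
  have hzoom : (radial p fun r => ψ ((p : ℝ)⁻¹ * r)) = fun x y => c * radial p ψ' x y :=
    funext₂ fun x y => hc _ (norm_nonneg _)
  have hball : ∀ k, coeff k (PowerSeries.rescale (p : 𝕜)⁻¹
      (grandSeries (radial p fun r => ψ ((p : ℝ)⁻¹ * r)) (μ.restrict (Zball p)))) =
      shrinkFactor p c k * coeff k (grandSeries (radial p ψ') (μ.restrict (Zball p))) := fun k => by
    rw [PowerSeries.coeff_rescale, hzoom, coeff_grandSeries, partitionFunction_const_mul,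
      coeff_grandSeries, shrinkFactor, mul_div_assoc, mul_assoc]
  simpa only [hball] using sum_mul_coeff_eq_of_coeff_eq_coeff_pow fun k hk =>
    coeff_grandSeries_radial_eq_coeff_pow μ hψ h1 fun m hm => hn m (hm.trans hk)

end RadialInteraction

/-! ### Absolute convergence -/

section TruncatedPower

variable {p : ℕ} (b : ℝ) (m : ℕ)

/-- The power profile `r ↦ r ^ b`, switched off at distances below `p ^ (-m)` so that it stays
bounded for `b < 0`. -/
noncomputable def truncPow (p : ℕ) (b : ℝ) (m : ℕ) (r : ℝ) : ℝ :=
  if (p : ℝ)⁻¹ ^ m ≤ r then r ^ b else 0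

theorem measurable_truncPow : Measurable (truncPow p b m) :=
  Measurable.ite measurableSet_Ici (by fun_prop) measurable_const

theorem truncPow_nonneg {r : ℝ} (hr : 0 ≤ r) : 0 ≤ truncPow p b m r := by
  rw [truncPow]
  split_ifs <;> positivity

theorem truncPow_one : truncPow p b m 1 = 1 := by
  rw [truncPow, if_pos (pow_le_one₀ (by positivity) (Nat.cast_inv_le_one p)), Real.one_rpow]

theorem truncPow_le_truncPow_succ {r : ℝ} (hr : 0 ≤ r) :
    truncPow p b m r ≤ truncPow p b (m + 1) r := by
  have hpow : (p : ℝ)⁻¹ ^ (m + 1) ≤ (p : ℝ)⁻¹ ^ m :=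
    pow_le_pow_of_le_one (by positivity) (Nat.cast_inv_le_one p) m.le_succ
  by_cases h : (p : ℝ)⁻¹ ^ m ≤ r
  · rw [truncPow, truncPow, if_pos h, if_pos (hpow.trans h)]
  · rw [truncPow, if_neg h]
    exact truncPow_nonneg b _ hr

variable [Fact p.Prime]

theorem truncPow_le {r : ℝ} (h0 : 0 ≤ r) (h1 : r ≤ 1) :
    truncPow p b m r ≤ max 1 (((p : ℝ)⁻¹ ^ m) ^ b) := by
  have hp : 0 < (p : ℝ)⁻¹ := inv_pos.mpr (mod_cast (Fact.out : p.Prime).pos)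
  rw [truncPow]
  split_ifs with h
  · rcases le_total 0 b with hb | hb
    · exact le_max_of_le_left (Real.rpow_le_one h0 h1 hb)
    · exact le_max_of_le_right (Real.rpow_le_rpow_of_nonpos (by positivity) h hb)
  · positivity

theorem truncPow_succ_inv_mul {r : ℝ} (hr : 0 ≤ r) :
    truncPow p b (m + 1) ((p : ℝ)⁻¹ * r) = (p : ℝ) ^ (-b) * truncPow p b m r := by
  have hp : 0 < (p : ℝ)⁻¹ := inv_pos.mpr (mod_cast (Fact.out : p.Prime).pos)
  rw [truncPow, truncPow, pow_succ', Real.mul_rpow hp.le hr, Real.inv_rpow p.cast_nonneg,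
    ← Real.rpow_neg p.cast_nonneg, mul_ite, mul_zero]
  simp only [mul_le_mul_iff_right₀ hp]

theorem tendsto_truncPow {r : ℝ} (hr : 0 < r) :
    Filter.Tendsto (fun m => truncPow p b m r) Filter.atTop (nhds (r ^ b)) := by
  have hp : (p : ℝ)⁻¹ < 1 := inv_lt_one_of_one_lt₀ (mod_cast (Fact.out : p.Prime).one_lt)
  have hpow := tendsto_pow_atTop_nhds_zero_of_lt_one (by positivity) hp
  exact tendsto_const_nhds.congr' <| (hpow.eventually_le_const hr).mono fun m hm =>
    (if_pos hm).symm

theorem truncPow_zero : truncPow p b m 0 = 0 := by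
  have hp : (0 : ℝ) < p := mod_cast (Fact.out : p.Prime).pos
  exact if_neg (not_le.mpr (by positivity))

end TruncatedPower

section Convergence

variable {p : ℕ} [Fact p.Prime]

theorem mul_shrinkFactor_lt_one {b : ℝ} {n : ℕ} (hn : 2 ≤ n) (hb : -2 < n * b) :
    p * shrinkFactor p ((p : ℝ) ^ (-b)) n < 1 := by
  have hp1 : (1 : ℝ) < p := mod_cast (Fact.out : p.Prime).one_lt
  have hp0 : (0 : ℝ) < p := one_pos.trans hp1
  have hexp : p * shrinkFactor p ((p : ℝ) ^ (-b)) n =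
      (p : ℝ) ^ (-(((n : ℝ) - 1) * (1 + n * b / 2))) := by
    have hinv : (p : ℝ)⁻¹ ^ n = (p : ℝ) ^ (-n : ℝ) := by
      rw [Real.rpow_neg hp0.le, Real.rpow_natCast, inv_pow]
    rw [shrinkFactor, hinv, ← Real.rpow_mul_natCast hp0.le, ← Real.rpow_add hp0, mul_comm,
      ← Real.rpow_add_one hp0.ne', Nat.cast_choose_two]
    congr 1
    ring
  rw [hexp]
  have hn1 : (1 : ℝ) < n := mod_cast hn
  exact Real.rpow_lt_one_of_one_lt_of_neg hp1
    (neg_lt_zero.mpr (mul_pos (by linarith) (by linarith)))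

theorem converges_radial_truncPow (μ : Measure ℚ_[p]) [IsFiniteMeasureOnCompacts μ]
    (b : ℝ) (m n : ℕ) :
    Converges (radial p (truncPow p b m)) (μ.restrict (Zball p)) n :=
  converges_radial μ (measurable_truncPow b m) (fun _ h0 h1 =>
    (Real.norm_of_nonneg (truncPow_nonneg b m h0)).trans_le (truncPow_le b m h0 h1)) n

variable (μ : Measure ℚ_[p]) [μ.IsAddHaarMeasure]

theorem exists_bound_coeff_grandSeries_truncPow [IsProbabilityMeasure (μ.restrict (Zball p))]
    {b : ℝ} {N : ℕ} (hb : ∀ n ≤ N, -2 < n * b) {n : ℕ} (hn : n ≤ N) :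
    ∃ C, ∀ m, coeff n (grandSeries (radial p (truncPow p b m)) (μ.restrict (Zball p))) ≤ C := by
  have hnonneg m (x y : ℚ_[p]) : 0 ≤ radial p (truncPow p b m) x y :=
    truncPow_nonneg b m (norm_nonneg _)
  refine exists_bound_of_quadratic_recursion
    (a := fun m n => coeff n (grandSeries (radial p (truncPow p b m)) (μ.restrict (Zball p))))
    (w := shrinkFactor p ((p : ℝ) ^ (-b))) (q := p) (N := N) (fun m n => ?_) (fun m n => ?_)
    (fun m n hn1 => ?_) (shrinkFactor_nonneg p (by positivity)) (by simp [shrinkFactor])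
    p.cast_nonneg (fun n h2 hn => mul_shrinkFactor_lt_one h2 (hb n hn))
    (fun m n => quadratic_recurrence_radial μ (measurable_truncPow b _) (truncPow_one b _)
      (fun r hr => truncPow_succ_inv_mul b m hr) fun k _ => converges_radial_truncPow μ b _ k) hn
  · rw [coeff_grandSeries]
    exact div_nonneg (integral_nonneg (boltzmannWeight_nonneg (hnonneg m))) (Nat.cast_nonneg _)
  · simp only [coeff_grandSeries]
    gcongr
    exact integral_mono (converges_radial_truncPow μ b m n) (converges_radial_truncPow μ b _ n)
      (boltzmannWeight_mono (hnonneg m) fun x y => truncPow_le_truncPow_succ b m (norm_nonneg _))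
  · rw [coeff_grandSeries, partitionFunction_of_le_one _ hn1]
    interval_cases n <;> simp

/-- The log-Coulomb interaction `|x - y| ^ β`. -/
noncomputable def logCoulomb (p : ℕ) [Fact p.Prime] (β : ℂ) : ℚ_[p] → ℚ_[p] → ℂ :=
  radial p fun r => (r : ℂ) ^ β

theorem converges_logCoulomb [IsProbabilityMeasure (μ.restrict (Zball p))] {β : ℂ} {N : ℕ}
    (hβ : ∀ n ≤ N, -2 < n * β.re) {n : ℕ} (hn : n ≤ N) :
    Converges (logCoulomb p β) (μ.restrict (Zball p)) n := by
  -- For `β = 0` the interaction is `0 ^ 0 = 1` on the diagonal, where every `truncPow` vanishes.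
  rcases eq_or_ne β 0 with rfl | hβ0
  · exact converges_radial μ (by fun_prop) (C := 1) (by simp) n
  obtain ⟨C, hC⟩ := exists_bound_coeff_grandSeries_truncPow μ hβ hn
  refine converges_of_tendsto_of_partitionFunction_le (C := C * n.factorial)
    (measurable_radial (by fun_prop)) (fun m => measurable_radial (measurable_truncPow β.re m))
    (fun m x y => truncPow_nonneg β.re m (norm_nonneg _)) (fun x y => ?_)
    (fun m => converges_radial_truncPow μ β.re m n) fun m => ?_
  · simp only [radial]
    rcases (norm_nonneg (x - y)).eq_or_lt' with h | h
    · simp [h, hβ0, truncPow_zero]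
    · rw [Complex.norm_cpow_eq_rpow_re_of_pos h]
      exact tendsto_truncPow β.re h
  · exact (div_le_iff₀ (by positivity)).mp ((coeff_grandSeries _ _ _).symm.trans_le (hC m))

end Convergence

/-! ### The quadratic recurrence -/

section QuadraticRecurrence

/-- The argument of the hyperbolic sine in the numerator of `rho n k t β`. -/
noncomputable def rhoAngle (n k : ℕ) (t : ℝ) (β : ℂ) : ℂ :=
  t / 2 * ((n + n.choose 2 * β) * (1 - 2 * k / n) + 1)

variable {n : ℕ} {t : ℝ} {β : ℂ}

theorem rhoAngle_self (hn : n ≠ 0) : rhoAngle n n t β = -(t / 2 * (n + n.choose 2 * β - 1)) := by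
  have hn' : (n : ℂ) ≠ 0 := Nat.cast_ne_zero.mpr hn
  rw [rhoAngle]
  field_simp
  ring

theorem rho_eq_neg_sinh_div_sinh (hn : n ≠ 0) (ht : t ≠ 0) (k : ℕ) :
    rho n k t β = -(Complex.sinh (rhoAngle n k t β) / Complex.sinh (rhoAngle n n t β)) := by
  rw [rhoAngle_self hn, Complex.sinh_neg, div_neg, neg_neg, rho, if_neg ht, rhoAngle]

theorem sinh_ne_zero_of_re_ne_zero {z : ℂ} (hz : z.re ≠ 0) : Complex.sinh z ≠ 0 := by
  intro h
  rw [Complex.sinh, div_eq_zero_iff, or_iff_left two_ne_zero, sub_eq_zero] at h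
  have hre := Real.exp_injective (by simpa only [Complex.norm_exp] using congrArg norm h)
  rw [Complex.neg_re] at hre
  exact hz (by linarith)

theorem sinh_rhoAngle_self_ne_zero (ht : t ≠ 0) (hn : 2 ≤ n) (hβ : -2 < n * β.re) :
    Complex.sinh (rhoAngle n n t β) ≠ 0 := by
  have hn1 : (1 : ℝ) < n := mod_cast hn
  have hfactor : rhoAngle n n t β = (-(t / 2 * (n - 1)) : ℝ) * (1 + (n / 2 : ℝ) * β) := by
    rw [rhoAngle_self (by omega), Nat.cast_choose_two]
    push_cast
    ring
  refine sinh_ne_zero_of_re_ne_zero ?_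
  rw [hfactor, Complex.re_ofReal_mul, Complex.add_re, Complex.re_ofReal_mul, Complex.one_re]
  exact mul_ne_zero (neg_ne_zero.mpr (mul_ne_zero (by positivity) (by linarith))) (by linarith)

theorem F_eq_sum_Ico (t : ℝ) (β : ℂ) (hn : 2 ≤ n) :
    F n t β = ∑ k ∈ Finset.Ico 1 n, k / n * rho n k t β * F (n - k) t β * F k t β := by
  obtain ⟨m, rfl⟩ := Nat.exists_eq_add_of_le' hn
  rw [F, Finset.sum_attach (Finset.Icc 1 (m + 1)) fun k =>
    (k : ℂ) / (m + 2) * rho (m + 2) k t β * F (m + 2 - k) t β * F k t β]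
  push_cast
  rfl

theorem eq_F_of_sum_sinh_eq_zero (ht : t ≠ 0) {N : ℕ} (hβ : ∀ n ≤ N, -2 < n * β.re) {f : ℕ → ℂ}
    (hf : ∀ n ≤ 1, f n = 1)
    (hsum : ∀ n ≤ N, ∑ k ∈ Finset.range (n + 1),
      k * Complex.sinh (rhoAngle n k t β) * (f k * f (n - k)) = 0) (hn : n ≤ N) :
    f n = F n t β := by
  induction n using Nat.strong_induction_on with
  | _ n ih =>
    rcases Nat.lt_or_ge n 2 with h2 | h2
    · interval_cases n <;> simp [hf, F]
    have hS := sinh_rhoAngle_self_ne_zero ht h2 (hβ n hn)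
    have hn0 : (n : ℂ) ≠ 0 := Nat.cast_ne_zero.mpr (by omega)
    have hlast := hsum n hn
    rw [Finset.sum_range_succ, Finset.sum_range_eq_add_Ico _ (by omega), Nat.sub_self,
      hf 0 zero_le_one, Nat.cast_zero, zero_mul, zero_mul, zero_add, mul_one,
      add_comm, add_eq_zero_iff_eq_neg] at hlast
    rw [F_eq_sum_Ico t β h2, ← mul_right_inj' (mul_ne_zero hn0 hS), hlast, Finset.mul_sum,
      ← Finset.sum_neg_distrib]
    refine Finset.sum_congr rfl fun k hk => ?_
    have hk := Finset.mem_Ico.mp hk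
    rw [ih k (by omega) (by omega), ih (n - k) (by omega) (by omega),
      rho_eq_neg_sinh_div_sinh (by omega) ht]
    field_simp

theorem natCast_cpow_eq_exp {p : ℕ} (hp : p ≠ 0) (z : ℂ) :
    (p : ℂ) ^ z = Complex.exp (Real.log p * z) := by
  rw [Complex.cpow_def_of_ne_zero (Nat.cast_ne_zero.mpr hp), Complex.natCast_log]

theorem inv_natCast_mul_cpow (p : ℕ) (β : ℂ) {r : ℝ} (hr : 0 ≤ r) :
    (((p : ℝ)⁻¹ * r : ℝ) : ℂ) ^ β = (p : ℂ) ^ (-β) * (r : ℂ) ^ β := by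
  have hp := Complex.inv_cpow (p : ℂ) β (by simp [Real.pi_ne_zero.symm])
  rw [Complex.ofReal_mul, Complex.mul_cpow_ofReal_nonneg (by positivity) hr, Complex.ofReal_inv,
    Complex.ofReal_natCast, hp, Complex.cpow_neg]

theorem shrinkFactor_cpow_eq_exp {p : ℕ} (hp : p ≠ 0) (β : ℂ) (k : ℕ) :
    shrinkFactor p ((p : ℂ) ^ (-β)) k = Complex.exp (-Real.log p * (k + k.choose 2 * β)) := by
  have hinv : (p : ℂ)⁻¹ = Complex.exp (Real.log p * -1) := by
    rw [← natCast_cpow_eq_exp hp, Complex.cpow_neg_one]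
  rw [shrinkFactor, hinv, natCast_cpow_eq_exp hp, ← Complex.exp_nat_mul, ← Complex.exp_nat_mul,
    ← Complex.exp_add]
  ring_nf

theorem cpow_mul_shrinkFactor_mul_cpow {p k : ℕ} (hp : p ≠ 0) (β : ℂ) (hn : n ≠ 0)
    (hk : k ≤ n) :
    (p : ℂ) ^ (k.choose 2 * β / 2) *
        (shrinkFactor p ((p : ℂ) ^ (-β)) (n - k) * (p : ℂ) ^ ((n - k).choose 2 * β / 2)) =
      Complex.exp (Real.log p * (1 - n) / 2) * Complex.exp (-rhoAngle n k (Real.log p) β) := by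
  have hn0 : (n : ℂ) ≠ 0 := Nat.cast_ne_zero.mpr hn
  rw [shrinkFactor_cpow_eq_exp hp, natCast_cpow_eq_exp hp, natCast_cpow_eq_exp hp]
  simp only [← Complex.exp_add, rhoAngle, Nat.cast_choose_two, Nat.cast_sub hk]
  congr 1
  field_simp
  ring

theorem natCast_mul_shrinkFactor_mul_cpow_mul_cpow {p k : ℕ} (hp : p ≠ 0) (β : ℂ)
    (hn : n ≠ 0) (hk : k ≤ n) :
    p * (shrinkFactor p ((p : ℂ) ^ (-β)) k * (p : ℂ) ^ (k.choose 2 * β / 2) *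
        (p : ℂ) ^ ((n - k).choose 2 * β / 2)) =
      Complex.exp (Real.log p * (1 - n) / 2) * Complex.exp (rhoAngle n k (Real.log p) β) := by
  have hn0 : (n : ℂ) ≠ 0 := Nat.cast_ne_zero.mpr hn
  have hpexp := natCast_cpow_eq_exp hp 1
  rw [Complex.cpow_one] at hpexp
  rw [shrinkFactor_cpow_eq_exp hp, natCast_cpow_eq_exp hp, natCast_cpow_eq_exp hp, hpexp]
  simp only [← Complex.exp_add, rhoAngle, Nat.cast_choose_two, Nat.cast_sub hk]
  congr 1
  field_simp
  ring

theorem sum_sinh_eq_zero_of_quadratic_recurrence {p : ℕ} (hp : p ≠ 0) {f : ℕ → ℂ}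
    (hquad : let Z k := (p : ℂ) ^ (k.choose 2 * β / 2) * f k
      let c := (p : ℂ) ^ (-β)
      ∑ k ∈ Finset.range (n + 1), k * Z k * (shrinkFactor p c (n - k) * Z (n - k)) =
        p * ∑ k ∈ Finset.range (n + 1), k * (shrinkFactor p c k * Z k) * Z (n - k)) :
    ∑ k ∈ Finset.range (n + 1),
      k * Complex.sinh (rhoAngle n k (Real.log p) β) * (f k * f (n - k)) = 0 := by
  rcases eq_or_ne n 0 with rfl | hn
  · simp
  have hC : 2 * Complex.exp (Real.log p * (1 - n) / 2) ≠ 0 :=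
    mul_ne_zero two_ne_zero (Complex.exp_ne_zero _)
  rw [← mul_right_inj' hC, mul_zero, ← sub_eq_zero_of_eq hquad.symm, Finset.mul_sum,
    Finset.mul_sum, ← Finset.sum_sub_distrib]
  refine Finset.sum_congr rfl fun k hk => ?_
  have hk := Nat.lt_succ_iff.mp (Finset.mem_range.mp hk)
  rw [Complex.sinh]
  linear_combination (k * (f k * f (n - k))) * (cpow_mul_shrinkFactor_mul_cpow hp β hn hk -
    natCast_mul_shrinkFactor_mul_cpow_mul_cpow hp β hn hk)

end QuadraticRecurrence

section LogCoulombGas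

variable {p : ℕ} [Fact p.Prime] (μ : Measure ℚ_[p]) [μ.IsAddHaarMeasure] {β : ℂ}

theorem coeff_grandSeries_logCoulomb [IsProbabilityMeasure (μ.restrict (Zball p))] {N : ℕ}
    (hβ : ∀ n ≤ N, -2 < n * β.re) {n : ℕ} (hn : n ≤ N) :
    coeff n (grandSeries (logCoulomb p β) (μ.restrict (Zball p))) =
      (p : ℂ) ^ (n.choose 2 * β / 2) * F n (Real.log p) β := by
  have hprime : p.Prime := Fact.out
  have hpow (k : ℕ) : (p : ℂ) ^ (k.choose 2 * β / 2) ≠ 0 := by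
    rw [natCast_cpow_eq_exp hprime.ne_zero]
    exact Complex.exp_ne_zero _
  let f (k : ℕ) := coeff k (grandSeries (logCoulomb p β) (μ.restrict (Zball p))) /
    (p : ℂ) ^ (k.choose 2 * β / 2)
  have hf (k : ℕ) : coeff k (grandSeries (logCoulomb p β) (μ.restrict (Zball p))) =
      (p : ℂ) ^ (k.choose 2 * β / 2) * f k := (mul_div_cancel₀ _ (hpow k)).symm
  have hf_one : ∀ k ≤ 1, f k = 1 := fun k hk => by
    simp only [f, coeff_grandSeries, partitionFunction_of_le_one _ hk]
    interval_cases k <;> simp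
  have hlog : Real.log p ≠ 0 := (Real.log_pos (mod_cast hprime.one_lt)).ne'
  rw [hf, eq_F_of_sum_sinh_eq_zero hlog hβ hf_one (fun m hm => ?_) hn]
  refine sum_sinh_eq_zero_of_quadratic_recurrence hprime.ne_zero ?_
  simp only [← hf]
  exact quadratic_recurrence_radial μ (by fun_prop) (by simp) (fun _ => inv_natCast_mul_cpow p β)
    fun k hk => converges_logCoulomb μ hβ (hk.trans hm)

theorem ZN_eq_factorial_mul_coeff (μ : Measure ℚ_[p]) [SigmaFinite μ] (S : Set ℚ_[p]) (N : ℕ)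
    (β : ℂ) : ZN p μ S N β =
      N.factorial * coeff N (grandSeries (logCoulomb p β) (μ.restrict S)) := by
  rw [coeff_grandSeries, mul_div_cancel₀ _ (Nat.cast_ne_zero.mpr N.factorial_ne_zero)]
  rfl

theorem neg_two_lt_mul_of_neg_two_div_lt {b : ℝ} {n N : ℕ} (hn : n ≤ N) (hb : -2 / (N : ℝ) < b) :
    -2 < n * b := by
  rcases n.eq_zero_or_pos with rfl | hn0
  · simp
  · have hn0' : (0 : ℝ) < n := Nat.cast_pos.mpr hn0
    have hdiv : 2 / (N : ℝ) ≤ 2 / n := by gcongr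
    refine (div_lt_iff₀' hn0').mp ?_
    rw [neg_div] at hb ⊢
    linarith

end LogCoulombGas

theorem statement_2 (p : ℕ) [Fact p.Prime]
    (μ : Measure ℚ_[p]) [SigmaFinite μ] [μ.IsAddHaarMeasure] (hμ : μ (Zball p) = 1)
    (N : ℕ) (hN : 2 ≤ N) (β : ℂ) (hβ : -2 / (N : ℝ) < β.re) :
    Integrable
      (fun x : Fin N → ℚ_[p] => ∏ q ∈ pairs N, (‖x q.1 - x q.2‖ : ℂ) ^ β)
      (Measure.pi fun _ => μ.restrict (Zball p)) ∧
    ZN p μ (Zball p) N β =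
      (N.factorial : ℂ) * (p : ℂ) ^ ((N.choose 2 : ℂ) * β / 2) * F N (Real.log p) β := by
  have : IsProbabilityMeasure (μ.restrict (Zball p)) := ⟨by rw [Measure.restrict_apply_univ, hμ]⟩
  have hβN : ∀ n ≤ N, -2 < n * β.re := fun n hn => neg_two_lt_mul_of_neg_two_div_lt hn hβ
  refine ⟨converges_logCoulomb μ hβN le_rfl, ?_⟩
  rw [ZN_eq_factorial_mul_coeff, coeff_grandSeries_logCoulomb μ hβN le_rfl, mul_assoc]

end LogCoulomb
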